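/- Let (G,B) be an enhanced Rota-Baxter two-sided brace, with descendent brace G_B = (G,·,∗) where a ∗ b = a ∘ Ad∘_{B(a)}(b). Define B₊ : G → G by B₊(a) = a ∘ B(a). Then B₊ is a homomorphism of braces from G_B to (G,·,∘): B₊(a · b) = B₊(a) · B₊(b) and B₊(a ∗ b) = B₊(a) ∘ B₊(b) for all a,b ∈ G. -/

import Mathlib

/-!
The enhanced identity at `x = (B a)⁻¹` says `B (a ∘ b) = B a · B b`, so `B` turns both operations
into the abelian operation `·` and is invariant under `Ad∘`. The enhanced identity at `a = 1` then
becomes `x ∘ B b = x · B b` for all `x` and `b` (`circ_B_eq_mul`). Hence `B₊ a = a · B a`, which is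
multiplicative for `·`. Multiplicativity for `∗` is the usual Rota-Baxter computation
`B₊ (a ∗ b) = a ∘ B a ∘ b ∘ (B a)‾ ∘ B a ∘ B b = B₊ a ∘ B₊ b`.
-/

structure IsGroup {G : Type*} (op : G → G → G) (e : G) (inv : G → G) : Prop where
  assoc : ∀ a b c, op (op a b) c = op a (op b c)
  one_op : ∀ a, op e a = a
  op_one : ∀ a, op a e = a
  inv_op : ∀ a, op (inv a) a = e
  op_inv : ∀ a, op a (inv a) = e

/-- A brace: an abelian group `(G, mul)` and a group `(G, circ)` with the compatibility
`a ∘ (b · c) = (a ∘ b) · a⁻¹ · (a ∘ c)`. -/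
structure IsBrace {G : Type*} (mul : G → G → G) (e : G) (inv : G → G)
    (circ : G → G → G) (ce : G) (cinv : G → G) : Prop where
  mul_group : IsGroup mul e inv
  mul_comm : ∀ a b, mul a b = mul b a
  circ_group : IsGroup circ ce cinv
  compat : ∀ a b c, circ a (mul b c) = mul (mul (circ a b) (inv a)) (circ a c)

/-- A homomorphism of braces preserves both operations. -/
def IsBraceHom {G H : Type*} (mulG circG : G → G → G) (mulH circH : H → H → H)
    (f : G → H) : Prop :=
  (∀ a b, f (mulG a b) = mulH (f a) (f b)) ∧ (∀ a b, f (circG a b) = circH (f a) (f b))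

/-- A brace automorphism: a bijective self-homomorphism. -/
def IsBraceAut {H : Type*} (mulH circH : H → H → H) (f : H → H) : Prop :=
  Function.Bijective f ∧ IsBraceHom mulH circH mulH circH f

/-- A semi-trivial action of the brace `G` on the brace `H`: each `Φ a` is a brace
automorphism of `H` and `Φ (a ∘ b) = Φ a ∘ Φ b`. -/
def IsSemiTrivialAction {G H : Type*} (circG : G → G → G)
    (mulH circH : H → H → H) (Φ : G → H → H) : Prop :=
  (∀ a, IsBraceAut mulH circH (Φ a)) ∧ (∀ a b h, Φ (circG a b) h = Φ a (Φ b h))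

/-- A relative Rota-Baxter operator on the brace `G` with respect to the semi-trivial
action `Φ` of `G` on `H`. -/
def IsRelRBO {G H : Type*} (mulG circG : G → G → G) (mulH circH : H → H → H)
    (Φ : G → H → H) (B : H → G) : Prop :=
  (∀ h k, mulG (B h) (B k) = B (mulH h k)) ∧
  (∀ h k, circG (B h) (B k) = B (circH h (Φ (B h) k)))

/-- An enhanced relative Rota-Baxter operator. -/
def IsEnhancedRelRBO {G H : Type*} (mulG circG : G → G → G) (mulH circH : H → H → H)
    (Φ : G → H → H) (B : H → G) : Prop :=
  (∀ h k, mulG (B h) (B k) = B (mulH h k)) ∧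
  (∀ (a : G) (h k : H), circG (mulG (B h) a) (B k)
      = mulG (B (circH h (Φ (mulG (B h) a) k))) a)

/-- A post-group: a group `(G, circ)` with an operation `tri` such that each left
multiplication `tri a` is an automorphism of `(G, circ)` and the weighted associativity
`(a ∘ (a ⊳ b)) ⊳ c = a ⊳ (b ⊳ c)` holds. -/
structure IsPostGroup {G : Type*} (circ : G → G → G) (ce : G) (cinv : G → G)
    (tri : G → G → G) : Prop where
  circ_group : IsGroup circ ce cinv
  tri_bij : ∀ a, Function.Bijective (tri a)
  tri_circ : ∀ a b c, tri a (circ b c) = circ (tri a b) (tri a c)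
  weighted : ∀ a b c, tri (circ a (tri a b)) c = tri a (tri b c)

/-- A post-brace: a brace `(G, mul, circ)` with `tri` making `(G, circ, tri)` a post-group
and `a ⊳ (b · c) = (a ⊳ b) · (a ⊳ c)`. -/
structure IsPostBrace {G : Type*} (mul : G → G → G) (e : G) (inv : G → G)
    (circ : G → G → G) (ce : G) (cinv : G → G) (tri : G → G → G) : Prop where
  brace : IsBrace mul e inv circ ce cinv
  post : IsPostGroup circ ce cinv tri
  tri_mul : ∀ a b c, tri a (mul b c) = mul (tri a b) (tri a c)

/-- A two-sided brace. -/
def IsTwoSidedBrace {G : Type*} (mul : G → G → G) (e : G) (inv : G → G)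
    (circ : G → G → G) (ce : G) (cinv : G → G) : Prop :=
  IsBrace mul e inv circ ce cinv ∧
  ∀ a b c, circ (mul a b) c = mul (mul (circ a c) (inv c)) (circ b c)

/-- The adjoint action of the `circ`-group: `Ad∘_a(b) = a ∘ b ∘ ā`. -/
def adC {G : Type*} (circ : G → G → G) (cinv : G → G) (a b : G) : G :=
  circ (circ a b) (cinv a)

/-- A Rota-Baxter operator on a two-sided brace (w.r.t. the adjoint semi-trivial action). -/
def IsRBTwoSided {G : Type*} (mul circ : G → G → G) (cinv : G → G) (B : G → G) : Prop :=
  (∀ a b, mul (B a) (B b) = B (mul a b)) ∧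
  (∀ a b, circ (B a) (B b) = B (circ a (adC circ cinv (B a) b)))

/-- An enhanced Rota-Baxter operator on a two-sided brace. -/
def IsEnhancedRBTwoSided {G : Type*} (mul circ : G → G → G) (cinv : G → G)
    (B : G → G) : Prop :=
  IsRBTwoSided mul circ cinv B ∧
  ∀ a b x, circ (mul (B a) x) (B b)
      = mul (B (circ a (adC circ cinv (mul (B a) x) b))) x

/-- `R × Id` on `X × X × X`. -/
def YB12 {X : Type*} (R : X × X → X × X) : X × X × X → X × X × X :=
  fun p => ((R (p.1, p.2.1)).1, (R (p.1, p.2.1)).2, p.2.2)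

/-- `Id × R` on `X × X × X`. -/
def YB23 {X : Type*} (R : X × X → X × X) : X × X × X → X × X × X :=
  fun p => (p.1, R p.2)

/-- A set-theoretical solution of the Yang-Baxter equation. -/
def IsYBSolution {X : Type*} (R : X × X → X × X) : Prop :=
  Function.Bijective R ∧
  YB12 R ∘ YB23 R ∘ YB12 R = YB23 R ∘ YB12 R ∘ YB23 R

/-- Non-degeneracy of a solution `R (a, b) = (φ_a b, ψ_b a)`. -/
def IsNonDegenerate {X : Type*} (R : X × X → X × X) : Prop :=
  (∀ a, Function.Bijective fun b => (R (a, b)).1) ∧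
  (∀ b, Function.Bijective fun a => (R (a, b)).2)

/-- Involutivity of a solution: `R ∘ R = Id`. -/
def IsInvolutiveSol {X : Type*} (R : X × X → X × X) : Prop :=
  ∀ p, R (R p) = p

/-- A matched pair of groups `(G, H, σ)` with `σ (a, h) = (r a h, l a h)`. -/
def IsMatchedPairOfGroups {G H : Type*} (opG : G → G → G) (eG : G)
    (opH : H → H → H) (eH : H) (r : G → H → H) (l : G → H → G) : Prop :=
  (∀ h, r eG h = h) ∧
  (∀ a b h, r a (r b h) = r (opG a b) h) ∧
  (∀ a b h, l (opG a b) h = opG (l a (r b h)) (l b h)) ∧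
  (∀ a, l a eH = a) ∧
  (∀ a h k, l (l a h) k = l a (opH h k)) ∧
  (∀ a h k, r a (opH h k) = opH (r a h) (r (l a h) k))

/-- A left ideal of the brace with multiplication `op` (with unit `u`) and second
operation `cop`: a subgroup of the `op`-group such that `p⁻¹ op (p cop x) ∈ S`
(expressed via the unique solution `r` of `op p r = cop p x`). -/
def IsLeftIdealOf {P : Type*} (op : P → P → P) (u : P) (cop : P → P → P)
    (S : Set P) : Prop :=
  u ∈ S ∧ (∀ p ∈ S, ∀ q ∈ S, op p q ∈ S) ∧
  (∀ p ∈ S, ∃ q ∈ S, op p q = u ∧ op q p = u) ∧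
  (∀ p : P, ∀ x ∈ S, ∀ r, op p r = cop p x → r ∈ S)

/-- `I` is an ideal of the sub-brace `S` of the ambient brace: a subgroup of `(S, mul)`,
normal in `(S, mul)` and in `(S, circ)`, and a left ideal of `S`. -/
def IsIdealOfSub {G : Type*} (mul : G → G → G) (e : G) (inv : G → G)
    (circ : G → G → G) (cinv : G → G) (S I : Set G) : Prop :=
  I ⊆ S ∧ e ∈ I ∧
  (∀ x ∈ I, ∀ y ∈ I, mul x y ∈ I) ∧ (∀ x ∈ I, inv x ∈ I) ∧
  (∀ s ∈ S, ∀ x ∈ I, mul (mul s x) (inv s) ∈ I) ∧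
  (∀ s ∈ S, ∀ x ∈ I, circ (circ s x) (cinv s) ∈ I) ∧
  (∀ s ∈ S, ∀ x ∈ I, mul (inv s) (circ s x) ∈ I)

/-- The two identity elements of a brace coincide. -/
theorem IsBrace.ce_eq_e {G : Type*} {mul : G → G → G} {e : G} {inv : G → G}
    {circ : G → G → G} {ce : G} {cinv : G → G}
    (h : IsBrace mul e inv circ ce cinv) : ce = e := by
  have h1 := h.compat ce e e
  rw [h.circ_group.one_op, h.circ_group.one_op, h.mul_group.one_op, h.mul_group.one_op,
    h.mul_group.op_one] at h1
  -- `h1 : e = ce⁻¹`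
  have h2 := h.mul_group.op_inv ce
  rwa [← h1, h.mul_group.op_one] at h2

/-- Left translation of the image of an enhanced Rota-Baxter operator is the same for both
operations. -/
theorem circ_B_eq_mul {G : Type*} {mul : G → G → G} {e : G} {inv : G → G}
    {circ : G → G → G} {ce : G} {cinv : G → G}
    (h : IsBrace mul e inv circ ce cinv)
    {B : G → G} (hB : IsEnhancedRBTwoSided mul circ cinv B) (x b : G) :
    circ x (B b) = mul x (B b) := by
  obtain ⟨⟨hadd, -⟩, henh⟩ := hB
  have hce := h.ce_eq_e
  subst hce
  have M := h.mul_group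
  have C := h.circ_group
  have hBe : B ce = ce := by
    have h1 := hadd ce ce
    rw [M.one_op] at h1
    have h2 := congrArg (mul (inv (B ce))) h1
    rwa [← M.assoc, M.inv_op, M.one_op] at h2
  have hcinv : cinv ce = ce := by
    have h1 := C.op_inv ce
    rwa [C.one_op] at h1
  have hBcirc : ∀ a b, B (circ a b) = mul (B a) (B b) := by
    intro a b
    have h1 := henh a b (inv (B a))
    rw [M.op_inv, adC, C.one_op, C.one_op, hcinv, C.op_one] at h1
    rw [h1, h.mul_comm (B a), M.assoc, M.inv_op, M.op_one]
  have hx : mul (B x) (B (cinv x)) = ce := by rw [← hBcirc, C.op_inv, hBe]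
  have h1 := henh ce b x
  rw [hBe, M.one_op, C.one_op, adC, hBcirc, hBcirc, h.mul_comm (B x), M.assoc (B b), hx,
    M.op_one] at h1
  rw [h1, h.mul_comm]

/-- For an enhanced Rota-Baxter two-sided brace `(G, B)` with descendent
brace `G_B = (G, ·, ∗)`, `a ∗ b = a ∘ Ad∘_{B(a)}(b)`, the map `B₊(a) = a ∘ B(a)` is a
homomorphism of braces from `G_B` to `(G, ·, ∘)`. -/
theorem statement16 {G : Type*} (mul : G → G → G) (e : G) (inv : G → G)
    (circ : G → G → G) (ce : G) (cinv : G → G)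
    (hG : IsTwoSidedBrace mul e inv circ ce cinv)
    (B : G → G) (hB : IsEnhancedRBTwoSided mul circ cinv B)
    (Bplus : G → G) (hBplus : ∀ a, Bplus a = circ a (B a)) :
    IsBraceHom mul (fun a b => circ a (adC circ cinv (B a) b)) mul circ Bplus := by
  have h := hG.1
  have M := h.mul_group
  have C := h.circ_group
  refine ⟨fun a b => ?_, fun a b => ?_⟩
  · simp only [hBplus, circ_B_eq_mul h hB]
    rw [← hB.1.1, M.assoc, M.assoc, ← M.assoc b, h.mul_comm b, M.assoc]
  · simp only [hBplus]
    rw [← hB.1.2]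
    simp only [adC, C.assoc]
    rw [← C.assoc (cinv (B a)), C.inv_op, C.one_op]
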